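/- arXiv:2411.15230 — 11 statements merged into one kernel-verified Lean document; each statement's English description precedes it below -/
import Mathlib

section
/- Let n ≥ 1 and let C : [0,1]^n → {0,1} be a collaboration strategy. If C is reliable (i.e., acc_C(S) ≥ min_{i∈[n]} acc_i(S) for every collaboration setting S), then C is non-collaborative: there exist k ∈ [n] and α ∈ {0,1} such that for every (p_1, …, p_n) ∈ (0,1)^n, C(p_1, …, p_n) = round(p_k) when p_k ≠ 1/2, and C(p_1, …, p_n) = α when p_k = 1/2. -/
open Finset

noncomputable def rnd (p : ℝ) : Bool := if (1/2 : ℝ) ≤ p then true else false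

structure CollabSetting (n : ℕ) where
  X : Type
  [finX : Fintype X]
  D : X × Bool → ℝ
  D_nonneg : ∀ z, 0 ≤ D z
  D_sum_one : ∑ z : X × Bool, D z = 1
  P : Fin n → X → ℝ
  P_mem : ∀ i x, 0 ≤ P i x ∧ P i x ≤ 1
  calibrated : ∀ (i : Fin n) (p : ℝ),
      0 < (∑ z : X × Bool, if P i z.1 = p then D z else 0) →
      (∑ z : X × Bool, if P i z.1 = p ∧ z.2 = true then D z else 0)
        = p * (∑ z : X × Bool, if P i z.1 = p then D z else 0)

attribute [instance] CollabSetting.finX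

noncomputable def acc {n : ℕ} (S : CollabSetting n) (Yhat : S.X → Bool) : ℝ :=
  ∑ z : S.X × Bool, if Yhat z.1 = z.2 then S.D z else 0

noncomputable def accAgent {n : ℕ} (S : CollabSetting n) (i : Fin n) : ℝ :=
  acc S (fun x => rnd (S.P i x))

noncomputable def accStrat {n : ℕ} (S : CollabSetting n) (C : (Fin n → ℝ) → Bool) : ℝ :=
  acc S (fun x => C (fun i => S.P i x))

/-- 0/1 real value of a label. -/
noncomputable def tv (b : Bool) : ℝ := if b = true then 1 else 0

lemma rnd_tv (b : Bool) : rnd (tv b) = b := by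
  cases b <;> norm_num [rnd, tv]

/-- Unnormalised, deterministic-label version of reliability. -/
lemma reliable_err {n : ℕ} (hn : 1 ≤ n) (C : (Fin n → ℝ) → Bool)
    (hreliable : ∀ S : CollabSetting n, (⨅ i : Fin n, accAgent S i) ≤ accStrat S C)
    (X : Type) [Fintype X] (w : X → ℝ) (y : X → Bool) (P : Fin n → X → ℝ)
    (hw : ∀ x, 0 ≤ w x) (hT : 0 < ∑ x, w x) (hP : ∀ i x, 0 ≤ P i x ∧ P i x ≤ 1)
    (hcal : ∀ i v, ∑ x, (if P i x = v then w x * (tv (y x) - v) else 0) = 0) :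
    ∃ i, ∑ x, (if C (fun i => P i x) ≠ y x then w x else 0)
      ≤ ∑ x, (if rnd (P i x) ≠ y x then w x else 0) := by
  set T := ∑ x, w x with hTdef
  let S : CollabSetting n :=
    { X := X
      D := fun z => if z.2 = y z.1 then w z.1 / T else 0
      D_nonneg := by
        intro z
        split_ifs
        · exact div_nonneg (hw _) hT.le
        · exact le_rfl
      D_sum_one := by
        rw [Fintype.sum_prod_type]
        simp only [Fintype.sum_bool]
        have : ∀ x, ((if true = y x then w x / T else 0) + (if false = y x then w x / T else 0))
            = w x / T := by
          intro x; cases y x <;> simp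
        simp only [this]
        rw [← Finset.sum_div, ← hTdef, div_self hT.ne']
      P := P
      P_mem := hP
      calibrated := by
        intro i p _
        rw [Fintype.sum_prod_type, Fintype.sum_prod_type]
        simp only [Fintype.sum_bool]
        rw [← sub_eq_zero, Finset.mul_sum, ← Finset.sum_sub_distrib]
        have h := hcal i p
        have h2 : (∑ x, (if P i x = p then w x * (tv (y x) - p) else 0)) / T = 0 := by
          rw [h, zero_div]
        rw [Finset.sum_div] at h2
        refine Eq.trans (Finset.sum_congr rfl fun x _ => ?_) h2
        by_cases hx : P i x = p <;> cases hy : y x <;> simp [hx, tv] <;> ring }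
  have key : ∀ Yh : X → Bool,
      acc S Yh = 1 - (∑ x, (if Yh x ≠ y x then w x else 0)) / T := by
    intro Yh
    have h1 : acc S Yh = ∑ x, (w x / T - (if Yh x ≠ y x then w x else 0) / T) := by
      unfold acc
      change ∑ z : X × Bool, (if Yh z.1 = z.2 then (if z.2 = y z.1 then w z.1 / T else 0) else 0) = _
      rw [Fintype.sum_prod_type]
      simp only [Fintype.sum_bool]
      refine Finset.sum_congr rfl fun x _ => ?_
      cases Yh x <;> cases y x <;> simp
    rw [h1, Finset.sum_sub_distrib, ← Finset.sum_div, ← Finset.sum_div, ← hTdef, div_self hT.ne']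
  have : Nonempty (Fin n) := ⟨⟨0, hn⟩⟩
  obtain ⟨i, hi⟩ := exists_eq_ciInf_of_finite (f := fun i : Fin n => accAgent S i)
  refine ⟨i, ?_⟩
  have h := hreliable S
  rw [← hi] at h
  unfold accAgent accStrat at h
  rw [key, key] at h
  have h3 := (sub_le_sub_iff_left 1).1 h
  exact (div_le_div_iff_of_pos_right hT).1 h3

lemma core {n : ℕ} (hn : 1 ≤ n) (C : (Fin n → ℝ) → Bool)
    (hreliable : ∀ S : CollabSetting n, (⨅ i : Fin n, accAgent S i) ≤ accStrat S C)
    (J : Type) [Fintype J] [Nonempty J] (p : J → Fin n → ℝ) (y : J → Bool)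
    (hy : ∀ j, C (p j) ≠ y j)
    (s : J → Fin n → ℝ) (hp : ∀ j i, p j i ∈ Set.Ioo (0 : ℝ) 1) (hs : ∀ j i, 0 ≤ s j i)
    (hcal : ∀ i v, ∑ j, (if p j i = v then (tv (y j) - v) + s j i * (tv (!(y j)) - v) else 0) = 0) :
    ∃ i, (Fintype.card J : ℝ) ≤ ∑ j, (if rnd (p j i) ≠ y j then 1 else s j i) := by
  have hw : ∀ x : J × Option (Fin n), 0 ≤ (x.2.elim 1 (s x.1) : ℝ) := by
    rintro ⟨j, _ | i⟩
    · simp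
    · exact hs j i
  obtain ⟨i, hi⟩ := reliable_err hn C hreliable (J × Option (Fin n))
    (fun x => x.2.elim 1 (s x.1))
    (fun x => x.2.elim (y x.1) (fun _ => !(y x.1)))
    (fun i x => x.2.elim (p x.1 i) (fun i' => if i' = i then p x.1 i else tv (!(y x.1))))
    hw
    (by
      obtain ⟨j⟩ := ‹Nonempty J›
      exact Finset.sum_pos' (fun x _ => hw x) ⟨(j, none), Finset.mem_univ _, by simp⟩)
    (by
      rintro i ⟨j, _ | i'⟩
      · exact ⟨(hp j i).1.le, (hp j i).2.le⟩
      · simp only [Option.elim]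
        split_ifs
        · exact ⟨(hp j i).1.le, (hp j i).2.le⟩
        · cases y j <;> simp [tv])
    (by
      intro i v
      rw [Fintype.sum_prod_type]
      refine Eq.trans (Finset.sum_congr rfl fun j _ => ?_) (hcal i v)
      rw [Fintype.sum_option]
      simp only [Option.elim]
      rw [Finset.sum_eq_single i]
      · by_cases h : p j i = v <;> simp [h]
      · intro i' _ hne
        simp only [hne, if_false]
        split_ifs with h
        · rw [h]; ring
        · rfl
      · simp)
  refine ⟨i, le_trans ?_ (hi.trans (le_of_eq ?_))⟩
  · rw [Fintype.sum_prod_type]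
    have : (Fintype.card J : ℝ) = ∑ j : J, (1 : ℝ) := by simp
    rw [this]
    refine Finset.sum_le_sum fun j _ => ?_
    rw [Fintype.sum_option]
    have h1 : C (fun i => p j i) ≠ y j := hy j
    change (1 : ℝ) ≤ (if C (fun i => p j i) ≠ y j then 1 else 0) +
      ∑ x, if C (fun i => if x = i then p j i else tv (!(y j))) ≠ !(y j) then s j x else 0
    rw [if_pos h1]
    refine le_add_of_nonneg_right (Finset.sum_nonneg fun i' _ => ?_)
    split_ifs
    · exact hs j i'
    · exact le_rfl
  · rw [Fintype.sum_prod_type]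
    refine Finset.sum_congr rfl fun j _ => ?_
    rw [Fintype.sum_option]
    change (if rnd (p j i) ≠ y j then (1 : ℝ) else 0) +
      (∑ x, if rnd (if x = i then p j i else tv (!(y j))) ≠ !(y j) then s j x else 0) = _
    rw [Finset.sum_eq_single i]
    · rw [if_pos rfl]
      cases rnd (p j i) <;> cases y j <;> simp
    · intro i' _ hne
      simp [hne, rnd_tv]
    · simp

/-- Compensating mass. -/
noncomputable def rr (b : Bool) (p : ℝ) : ℝ := if b = true then (1 - p) / p else p / (1 - p)

lemma rr_nonneg (b : Bool) {p : ℝ} (hp : p ∈ Set.Ioo (0 : ℝ) 1) : 0 ≤ rr b p := by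
  have h1 := hp.1
  have h2 : 0 < 1 - p := by linarith [hp.2]
  unfold rr
  split_ifs <;> positivity

lemma rr_cal (b : Bool) {p : ℝ} (hp : p ∈ Set.Ioo (0 : ℝ) 1) :
    (tv b - p) + rr b p * (tv (!b) - p) = 0 := by
  have h1 := hp.1.ne'
  have h2 : 1 - p ≠ 0 := by linarith [hp.2]
  cases b <;> simp [rr, tv] <;> field_simp <;> ring

lemma rr_le (b : Bool) {p : ℝ} (hp : p ∈ Set.Ioo (0 : ℝ) 1) :
    (if rnd p ≠ b then 1 else rr b p) ≤ 1 := by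
  have h1 := hp.1
  have h2 : 0 < 1 - p := by linarith [hp.2]
  split_ifs with h
  · exact le_rfl
  · push Not at h
    subst h
    unfold rr rnd
    by_cases h3 : (1 / 2 : ℝ) ≤ p
    · simp only [h3, if_true]
      rw [div_le_one h1]; linarith
    · simp only [h3, if_false]
      simp only [Bool.false_eq_true, if_false]
      rw [div_le_one h2]; linarith

lemma rr_lt (b : Bool) {p : ℝ} (hp : p ∈ Set.Ioo (0 : ℝ) 1) (hne : p ≠ 1 / 2) (hb : rnd p = b) :
    (if rnd p ≠ b then 1 else rr b p) < 1 := by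
  have h1 := hp.1
  have h2 : 0 < 1 - p := by linarith [hp.2]
  subst hb
  simp only [ne_eq, not_true_eq_false, if_false]
  unfold rr rnd
  by_cases h3 : (1 / 2 : ℝ) ≤ p
  · have h4 : 1 / 2 < p := lt_of_le_of_ne h3 (Ne.symm hne)
    simp only [h3, if_true]
    rw [div_lt_one h1]; linarith
  · simp only [h3, if_false]
    simp only [Bool.false_eq_true, if_false]
    rw [div_lt_one h2]; linarith

lemma step_one {n : ℕ} (hn : 1 ≤ n) (C : (Fin n → ℝ) → Bool)
    (hreliable : ∀ S : CollabSetting n, (⨅ i : Fin n, accAgent S i) ≤ accStrat S C) :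
    ∃ k : Fin n, ∀ p : Fin n → ℝ, (∀ i, p i ∈ Set.Ioo (0 : ℝ) 1) →
      p k ≠ 1 / 2 → C p = rnd (p k) := by
  by_contra hcon
  push Not at hcon
  choose p hp hne hC using hcon
  have : Nonempty (Fin n) := ⟨⟨0, hn⟩⟩
  obtain ⟨i, hi⟩ := core hn C hreliable (Fin n) p (fun j => rnd (p j j)) hC
    (fun j i => rr (rnd (p j j)) (p j i)) hp (fun j i => rr_nonneg _ (hp j i))
    (by
      intro i v
      refine Finset.sum_eq_zero fun j _ => ?_
      split_ifs with h
      · subst h; exact rr_cal _ (hp j i)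
      · rfl)
  have hlt : ∑ j, (if rnd (p j i) ≠ rnd (p j j) then 1 else rr (rnd (p j j)) (p j i))
      < ∑ j : Fin n, (1 : ℝ) :=
    Finset.sum_lt_sum (fun j _ => rr_le _ (hp j i))
      ⟨i, Finset.mem_univ _, rr_lt _ (hp i i) (hne i) rfl⟩
  simp only [Finset.sum_const, Finset.card_univ, nsmul_eq_mul, mul_one] at hlt
  exact absurd hi (not_le.2 hlt)

lemma step_two {n : ℕ} (hn : 1 ≤ n) (C : (Fin n → ℝ) → Bool)
    (hreliable : ∀ S : CollabSetting n, (⨅ i : Fin n, accAgent S i) ≤ accStrat S C)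
    (k : Fin n) (hk : ∀ p : Fin n → ℝ, (∀ i, p i ∈ Set.Ioo (0 : ℝ) 1) →
      p k ≠ 1 / 2 → C p = rnd (p k))
    (p q : Fin n → ℝ) (hp : ∀ i, p i ∈ Set.Ioo (0 : ℝ) 1) (hq : ∀ i, q i ∈ Set.Ioo (0 : ℝ) 1)
    (hpk : p k = 1 / 2) (hqk : q k = 1 / 2) (hCp : C p = true) (hCq : C q = false) : False := by
  set u : Fin n → ℝ := fun i => if i = k then 2 / 3 else 1 / 3 with hu
  have huI : ∀ i, u i ∈ Set.Ioo (0 : ℝ) 1 := by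
    intro i
    simp only [hu]
    split_ifs <;> constructor <;> norm_num
  have hCu : C u = true := by
    rw [hk u huI (by simp only [hu, if_true]; norm_num)]
    simp only [hu, if_true, rnd]
    norm_num
  obtain ⟨i, hi⟩ := core hn C hreliable (Fin 3) ![p, q, u] ![false, true, false]
    (by intro j; fin_cases j <;> simp [hCp, hCq, hCu])
    ![fun i => if i = k then 0 else rr false (p i), fun i => if i = k then 0 else rr true (q i),
      fun i => rr false (u i)]
    (by
      intro j i
      fin_cases j
      · exact hp i
      · exact hq i
      · exact huI i)
    (by
      intro j i
      fin_cases j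
      · simp only [Fin.zero_eta, Matrix.cons_val_zero]
        split_ifs
        · exact le_rfl
        · exact rr_nonneg _ (hp i)
      · simp only [Fin.mk_one, Matrix.cons_val_one, Matrix.cons_val_zero]
        split_ifs
        · exact le_rfl
        · exact rr_nonneg _ (hq i)
      · exact rr_nonneg false (huI i))
    (by
      intro i v
      rw [Fin.sum_univ_three]
      change (if p i = v then (tv false - v) + (if i = k then 0 else rr false (p i)) * (tv (!false) - v) else 0)
        + (if q i = v then (tv true - v) + (if i = k then 0 else rr true (q i)) * (tv (!true) - v) else 0)
        + (if u i = v then (tv false - v) + rr false (u i) * (tv (!false) - v) else 0) = 0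
      have h3 : (if u i = v then (tv false - v) + rr false (u i) * (tv (!false) - v) else 0) = 0 := by
        split_ifs with h
        · subst h; exact rr_cal _ (huI i)
        · rfl
      rw [h3, add_zero]
      by_cases hik : i = k
      · subst hik
        rw [hpk, hqk, if_pos rfl, if_pos rfl]
        split_ifs with h
        · subst h; norm_num [tv]
        · simp
      · simp only [hik, if_false]
        have h1 : (if p i = v then (tv false - v) + rr false (p i) * (tv (!false) - v) else 0) = 0 := by
          split_ifs with h
          · subst h; exact rr_cal _ (hp i)
          · rfl
        have h2 : (if q i = v then (tv true - v) + rr true (q i) * (tv (!true) - v) else 0) = 0 := by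
          split_ifs with h
          · subst h; exact rr_cal _ (hq i)
          · rfl
        rw [h1, h2, add_zero])
  rw [Fin.sum_univ_three] at hi
  change ((Fintype.card (Fin 3) : ℕ) : ℝ) ≤
    (if rnd (p i) ≠ false then 1 else (if i = k then 0 else rr false (p i)))
    + (if rnd (q i) ≠ true then 1 else (if i = k then 0 else rr true (q i)))
    + (if rnd (u i) ≠ false then 1 else rr false (u i)) at hi
  rw [Fintype.card_fin] at hi
  have h3 := rr_le false (huI i)
  by_cases hik : i = k
  · subst hik
    rw [hpk, hqk] at hi
    have hr : rnd (1 / 2) = true := by simp [rnd]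
    simp only [hr] at hi
    norm_num at hi h3
    linarith
  · simp only [hik, if_false] at hi
    have h1 := rr_le false (hp i)
    have h2 := rr_le true (hq i)
    have h4 := rr_lt false (huI i) (by simp only [hu, hik, if_false]; norm_num)
      (by simp only [hu, hik, if_false, rnd]; norm_num)
    push_cast at hi
    linarith

/-- Every reliable collaboration strategy is non-collaborative. -/
theorem stmt_0 (n : ℕ) (hn : 1 ≤ n) (C : (Fin n → ℝ) → Bool)
    (hreliable : ∀ S : CollabSetting n, (⨅ i : Fin n, accAgent S i) ≤ accStrat S C) :
    ∃ (k : Fin n) (α : Bool), ∀ p : Fin n → ℝ,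
      (∀ i, p i ∈ Set.Ioo (0 : ℝ) 1) →
      (p k ≠ 1/2 → C p = rnd (p k)) ∧ (p k = 1/2 → C p = α) := by
  obtain ⟨k, hk⟩ := step_one hn C hreliable
  refine ⟨k, C (fun _ => 1 / 2), fun p hp => ⟨hk p hp, fun hpk => ?_⟩⟩
  have hh : ∀ i : Fin n, (fun _ : Fin n => (1 / 2 : ℝ)) i ∈ Set.Ioo (0 : ℝ) 1 := by
    intro i; constructor <;> norm_num
  cases h1 : C p <;> cases h2 : C (fun _ => 1 / 2)
  · rfl
  · exact (step_two hn C hreliable k hk _ p hh hp rfl hpk h2 h1).elim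
  · exact (step_two hn C hreliable k hk p _ hp hh hpk rfl h1 h2).elim
  · rfl
end

section
/- Let n ≥ 1 and let S_1, …, S_ℓ be collaboration settings, each with n agents. Then for every tuple of nonnegative weights (λ_1, …, λ_ℓ) summing to 1, there exists a collaboration setting S such that acc_i(S) = Σ_{m=1}^ℓ λ_m · acc_i(S_m) for every i ∈ [n], and acc_C(S) = Σ_{m=1}^ℓ λ_m · acc_C(S_m) for every collaboration strategy C : [0,1]^n → {0,1}. -/
open Finset

theorem sum_sigma_bool {ℓ : ℕ} (X : Fin ℓ → Type) [∀ m, Fintype (X m)]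
    (f : (Σ m, X m) × Bool → ℝ) :
    ∑ z, f z = ∑ m, ∑ z : X m × Bool, f (⟨m, z.1⟩, z.2) := by
  simp only [Fintype.sum_prod_type]
  rw [Fintype.sum_sigma]

theorem calibrated_all {n : ℕ} (S : CollabSetting n) (i : Fin n) (p : ℝ) :
    (∑ z : S.X × Bool, if S.P i z.1 = p ∧ z.2 = true then S.D z else 0)
        = p * (∑ z : S.X × Bool, if S.P i z.1 = p then S.D z else 0) := by
  have hnn : ∀ z ∈ (Finset.univ : Finset (S.X × Bool)),
      0 ≤ (if S.P i z.1 = p then S.D z else 0) := by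
    intro z _
    split_ifs
    · exact S.D_nonneg z
    · exact le_rfl
  rcases (Finset.sum_nonneg hnn).lt_or_eq with h | h
  · exact S.calibrated i p h
  · rw [← h, mul_zero]
    have h0 := (Finset.sum_eq_zero_iff_of_nonneg hnn).1 h.symm
    refine Finset.sum_eq_zero fun z hz => ?_
    have h2 := h0 z hz
    by_cases h1 : S.P i z.1 = p
    · rw [if_pos h1] at h2
      rw [h2, ite_self]
    · exact if_neg fun h3 => h1 h3.1

noncomputable def mixSetting {n ℓ : ℕ} (Ss : Fin ℓ → CollabSetting n)
    (lam : Fin ℓ → ℝ) (hlam_nonneg : ∀ m, 0 ≤ lam m) (hlam_sum : ∑ m, lam m = 1) :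
    CollabSetting n where
  X := Σ m, (Ss m).X
  D := fun z => lam z.1.1 * (Ss z.1.1).D (z.1.2, z.2)
  D_nonneg := fun z => mul_nonneg (hlam_nonneg _) ((Ss z.1.1).D_nonneg _)
  D_sum_one := by
    rw [sum_sigma_bool]
    simp only [Prod.mk.eta, ← Finset.mul_sum, CollabSetting.D_sum_one, mul_one, hlam_sum]
  P := fun i x => (Ss x.1).P i x.2
  P_mem := fun i x => (Ss x.1).P_mem i x.2
  calibrated := by
    intro i p _
    rw [sum_sigma_bool, sum_sigma_bool, Finset.mul_sum]
    refine Finset.sum_congr rfl fun m _ => ?_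
    have h := calibrated_all (Ss m) i p
    simp only [Prod.mk.eta, ← mul_ite_zero, ← Finset.mul_sum]
    rw [h]
    ring

theorem acc_mixSetting {n ℓ : ℕ} (Ss : Fin ℓ → CollabSetting n)
    (lam : Fin ℓ → ℝ) (h0 : ∀ m, 0 ≤ lam m) (h1 : ∑ m, lam m = 1)
    (Y : (Fin n → ℝ) → Bool) :
    acc (mixSetting Ss lam h0 h1) (fun x => Y (fun i => (mixSetting Ss lam h0 h1).P i x))
      = ∑ m, lam m * acc (Ss m) (fun x => Y (fun i => (Ss m).P i x)) := by
  unfold acc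
  refine (sum_sigma_bool (fun m => (Ss m).X) _).trans ?_
  refine Finset.sum_congr rfl fun m _ => ?_
  rw [Finset.mul_sum]
  refine Finset.sum_congr rfl fun z _ => ?_
  rw [mul_ite_zero]
  rfl

/-- Linear combinations of collaboration settings. -/
theorem stmt_1 (n : ℕ) (hn : 1 ≤ n) (ℓ : ℕ)
    (Ss : Fin ℓ → CollabSetting n)
    (lam : Fin ℓ → ℝ) (hlam_nonneg : ∀ m, 0 ≤ lam m) (hlam_sum : ∑ m, lam m = 1) :
    ∃ S : CollabSetting n,
      (∀ i : Fin n, accAgent S i = ∑ m, lam m * accAgent (Ss m) i) ∧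
      (∀ C : (Fin n → ℝ) → Bool, accStrat S C = ∑ m, lam m * accStrat (Ss m) C) := by
  exact ⟨mixSetting Ss lam hlam_nonneg hlam_sum,
    fun i => acc_mixSetting Ss lam hlam_nonneg hlam_sum (fun v => rnd (v i)),
    fun C => acc_mixSetting Ss lam hlam_nonneg hlam_sum C⟩
end

section
/- Let n ≥ 1, let C : [0,1]^n → {0,1} be a collaboration strategy, and let k ∈ [n]. Suppose there exists a tuple (p_1, …, p_n) ∈ (0,1)^n with p_k ≠ 1/2 such that C(p_1, …, p_n) ≠ round(p_k). Then there exists a collaboration setting S_k such that acc_k(S_k) > acc_C(S_k), and acc_i(S_k) ≥ acc_C(S_k) for all i ∈ [n] with i ≠ k. -/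
open Finset

/-- Odds against the label `b` when the probability of `true` is `q`. -/
noncomputable def advOdds (b : Bool) (q : ℝ) : ℝ := if b then (1 - q) / q else q / (1 - q)

/-- Unnormalised mass function. -/
noncomputable def advMass {n : ℕ} (b : Bool) (p : Fin n → ℝ) : Option (Fin n) → ℝ
  | none => 1
  | some j => advOdds b (p j)

/-- Deterministic label. -/
def advLab {n : ℕ} (b : Bool) : Option (Fin n) → Bool
  | none => b
  | some _ => !b

/-- Predictions. -/
noncomputable def advPred {n : ℕ} (b : Bool) (p : Fin n → ℝ) (i : Fin n) : Option (Fin n) → ℝ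
  | none => p i
  | some j => if j = i then p i else (if b then 0 else 1)

lemma advOdds_pos (b : Bool) (q : ℝ) (hq : q ∈ Set.Ioo (0 : ℝ) 1) : 0 < advOdds b q := by
  have h1 := hq.1
  have h2 : 0 < 1 - q := by linarith [hq.2]
  cases b <;> simp only [advOdds] <;> simp <;> positivity

lemma advMass_pos {n : ℕ} (b : Bool) (p : Fin n → ℝ) (hp : ∀ i, p i ∈ Set.Ioo (0 : ℝ) 1)
    (x : Option (Fin n)) : 0 < advMass b p x := by
  cases x with
  | none => simp [advMass]
  | some j => exact advOdds_pos b _ (hp j)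

/-- Normalising constant. -/
noncomputable def advTot {n : ℕ} (b : Bool) (p : Fin n → ℝ) : ℝ := ∑ x, advMass b p x

lemma advTot_pos {n : ℕ} (b : Bool) (p : Fin n → ℝ) (hp : ∀ i, p i ∈ Set.Ioo (0 : ℝ) 1) :
    0 < advTot b p :=
  Finset.sum_pos (fun x _ => advMass_pos b p hp x) ⟨none, Finset.mem_univ _⟩

/-- The mass of a labelled point. -/
noncomputable def advD {n : ℕ} (b : Bool) (p : Fin n → ℝ) (z : Option (Fin n) × Bool) : ℝ :=
  if advLab b z.1 = z.2 then advMass b p z.1 / advTot b p else 0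

lemma sum_label {X : Type} [Fintype X] (l : X → Bool) (m : X → ℝ) (Q : X → Bool → Prop)
    [∀ x y, Decidable (Q x y)] :
    (∑ z : X × Bool, if Q z.1 z.2 then (if l z.1 = z.2 then m z.1 else 0) else 0)
      = ∑ x, if Q x (l x) then m x else 0 := by
  rw [Fintype.sum_prod_type]
  refine Finset.sum_congr rfl fun x _ => ?_
  rw [Fintype.sum_bool]
  cases h : l x <;> simp

lemma adv_cal {n : ℕ} (b : Bool) (p : Fin n → ℝ) (hp : ∀ i, p i ∈ Set.Ioo (0 : ℝ) 1)
    (i : Fin n) (t : ℝ) :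
    (∑ z : Option (Fin n) × Bool, if advPred b p i z.1 = t ∧ z.2 = true then advD b p z else 0)
      = t * (∑ z : Option (Fin n) × Bool, if advPred b p i z.1 = t then advD b p z else 0) := by
  unfold advD
  rw [sum_label (advLab b) (fun x => advMass b p x / advTot b p)
      (fun x y => advPred b p i x = t ∧ y = true),
    sum_label (advLab b) (fun x => advMass b p x / advTot b p)
      (fun x _ => advPred b p i x = t), Finset.mul_sum, ← sub_eq_zero, ← Finset.sum_sub_distrib,
    Fintype.sum_option, Finset.sum_eq_single i]
  · have h1 := (hp i).1
    have h2 : 0 < 1 - p i := by linarith [(hp i).2]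
    have hT := advTot_pos b p hp
    by_cases ht : p i = t
    · subst ht
      cases b <;> simp [advPred, advLab, advMass, advOdds] <;> field_simp <;> ring
    · simp [advPred, ht]
  · intro j _ hj
    cases b
    · by_cases ht : (1 : ℝ) = t
      · subst ht
        simp [advPred, advLab, hj]
      · simp [advPred, hj, ht]
    · by_cases ht : (0 : ℝ) = t
      · subst ht
        simp [advPred, advLab, hj]
      · simp [advPred, hj, ht]
  · simp

/-- The adversarial setting. -/
noncomputable def advS {n : ℕ} (b : Bool) (p : Fin n → ℝ) (hp : ∀ i, p i ∈ Set.Ioo (0 : ℝ) 1) :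
    CollabSetting n where
  X := Option (Fin n)
  D := advD b p
  D_nonneg z := by
    unfold advD
    split_ifs
    · exact (div_pos (advMass_pos b p hp _) (advTot_pos b p hp)).le
    · exact le_rfl
  D_sum_one := by
    have h := sum_label (advLab b) (fun x => advMass b p x / advTot b p) (fun _ _ => True)
    simp only [if_true] at h
    unfold advD
    rw [h, ← Finset.sum_div]
    exact div_self (advTot_pos b p hp).ne'
  P := advPred b p
  P_mem i x := by
    have h1 := hp i
    rcases x with _ | j
    · exact ⟨h1.1.le, h1.2.le⟩
    · by_cases hj : j = i
      · simp only [advPred, if_pos hj]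
        exact ⟨h1.1.le, h1.2.le⟩
      · simp only [advPred, if_neg hj]
        cases b <;> norm_num
  calibrated i t _ := adv_cal b p hp i t

lemma adv_acc {n : ℕ} (b : Bool) (p : Fin n → ℝ) (hp : ∀ i, p i ∈ Set.Ioo (0 : ℝ) 1)
    (Y : Option (Fin n) → Bool) :
    acc (advS b p hp) Y = (∑ x, if Y x = advLab b x then advMass b p x else 0) / advTot b p := by
  have h := sum_label (advLab b) (fun x => advMass b p x / advTot b p) (fun x y => Y x = y)
  refine h.trans ?_
  rw [Finset.sum_div]
  refine Finset.sum_congr rfl fun x _ => ?_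
  split_ifs <;> simp

lemma adv_strat {n : ℕ} (b : Bool) (p : Fin n → ℝ) (hp : ∀ i, p i ∈ Set.Ioo (0 : ℝ) 1)
    (C : (Fin n → ℝ) → Bool) (hC : C p ≠ b) :
    accStrat (advS b p hp) C ≤ (∑ j, advOdds b (p j)) / advTot b p := by
  refine (adv_acc b p hp (fun x => C (fun i => advPred b p i x))).trans_le ?_
  refine div_le_div_of_nonneg_right ?_ (advTot_pos b p hp).le
  rw [Fintype.sum_option]
  have h0 : ¬ (C (fun i => advPred b p i none) = advLab b (none : Option (Fin n))) := hC
  rw [if_neg h0, zero_add]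
  refine Finset.sum_le_sum fun j _ => ?_
  split_ifs
  · exact le_rfl
  · exact (advOdds_pos b _ (hp j)).le

lemma adv_rnd (b : Bool) : rnd (if b then 0 else 1) = !b := by
  cases b <;> norm_num [rnd]

lemma adv_agent_eq {n : ℕ} (b : Bool) (p : Fin n → ℝ) (hp : ∀ i, p i ∈ Set.Ioo (0 : ℝ) 1)
    (i : Fin n) (hi : rnd (p i) = b) :
    accAgent (advS b p hp) i = (1 - advOdds b (p i) + ∑ j, advOdds b (p j)) / advTot b p := by
  refine (adv_acc b p hp (fun x => rnd (advPred b p i x))).trans ?_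
  congr 1
  rw [Fintype.sum_option, ← Finset.add_sum_erase _ _ (Finset.mem_univ i),
    ← Finset.add_sum_erase _ (fun j => advOdds b (p j)) (Finset.mem_univ i)]
  have : ∑ x ∈ Finset.univ.erase i, (if rnd (advPred b p i (some x)) = advLab b (some x)
      then advMass b p (some x) else 0) = ∑ x ∈ Finset.univ.erase i, advOdds b (p x) := by
    refine Finset.sum_congr rfl fun j hj => ?_
    have hj' := Finset.ne_of_mem_erase hj
    rw [if_pos]
    · rfl
    · simp only [advPred, if_neg hj', advLab]
      exact adv_rnd b
  rw [this]
  simp [advPred, advLab, advMass, hi]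
  ring

lemma adv_agent_ne {n : ℕ} (b : Bool) (p : Fin n → ℝ) (hp : ∀ i, p i ∈ Set.Ioo (0 : ℝ) 1)
    (i : Fin n) (hi : rnd (p i) ≠ b) :
    accAgent (advS b p hp) i = (∑ j, advOdds b (p j)) / advTot b p := by
  refine (adv_acc b p hp (fun x => rnd (advPred b p i x))).trans ?_
  congr 1
  rw [Fintype.sum_option]
  have h0 : ¬ (rnd (advPred b p i none) = advLab b (none : Option (Fin n))) := hi
  rw [if_neg h0, zero_add]
  refine Finset.sum_congr rfl fun j _ => ?_
  rw [if_pos]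
  · rfl
  · simp only [advPred, advLab]
    split_ifs with h h'
    · revert hi; cases b <;> simp
    · simpa [h'] using adv_rnd b
    · simpa [h'] using adv_rnd b

lemma advOdds_le (b : Bool) (q : ℝ) (hq : q ∈ Set.Ioo (0 : ℝ) 1) (h : rnd q = b) :
    advOdds b q ≤ 1 := by
  have h1 := hq.1
  have h2 : 0 < 1 - q := by linarith [hq.2]
  cases b
  · have : q < 1/2 := by simpa [rnd] using h
    simp only [advOdds]
    simp
    rw [div_le_one h2]; linarith
  · have : 1/2 ≤ q := by simpa [rnd] using h
    simp only [advOdds]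
    simp
    rw [div_le_one h1]; linarith

lemma advOdds_lt (b : Bool) (q : ℝ) (hq : q ∈ Set.Ioo (0 : ℝ) 1) (h : rnd q = b)
    (hne : q ≠ 1/2) : advOdds b q < 1 := by
  refine lt_of_le_of_ne (advOdds_le b q hq h) fun he => hne ?_
  have h1 := hq.1
  have h2 : 0 < 1 - q := by linarith [hq.2]
  cases b
  · simp [advOdds] at he
    rw [div_eq_one_iff_eq h2.ne'] at he; linarith
  · simp [advOdds] at he
    rw [div_eq_one_iff_eq h1.ne'] at he; linarith

/-- An adversarial setting from a single disagreement point. -/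
theorem stmt_2 (n : ℕ) (hn : 1 ≤ n) (C : (Fin n → ℝ) → Bool) (k : Fin n)
    (p : Fin n → ℝ) (hp : ∀ i, p i ∈ Set.Ioo (0 : ℝ) 1)
    (hpk : p k ≠ 1/2) (hC : C p ≠ rnd (p k)) :
    ∃ S : CollabSetting n,
      accStrat S C < accAgent S k ∧
      (∀ i : Fin n, i ≠ k → accStrat S C ≤ accAgent S i) := by
  have hT := advTot_pos (rnd (p k)) p hp
  have hS := adv_strat (rnd (p k)) p hp C hC
  refine ⟨advS (rnd (p k)) p hp, lt_of_le_of_lt hS ?_, fun i _ => hS.trans ?_⟩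
  · rw [adv_agent_eq _ p hp k rfl]
    have := advOdds_lt _ (p k) (hp k) rfl hpk
    exact div_lt_div_of_pos_right (by linarith) hT
  · by_cases hi : rnd (p i) = rnd (p k)
    · rw [adv_agent_eq _ p hp i hi]
      have := advOdds_le _ (p i) (hp i) hi
      exact div_le_div_of_nonneg_right (by linarith) hT.le
    · rw [adv_agent_ne _ p hp i hi]
end

section
/- Let n ≥ 1 and let C : [0,1]^n → {0,1} be a collaboration strategy. If acc_C(S) ≥ min_{i∈[n]} acc_i(S) for every collaboration setting S, then there exists k ∈ [n] such that for every (p_1, …, p_n) ∈ (0,1)^n with p_k ≠ 1/2, C(p_1, …, p_n) = round(p_k). -/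
open Finset

/-- Deterministic-label weighted settings: some agent does no better than the strategy. -/
theorem weighted_setting (n : ℕ) (hn : 1 ≤ n) (C : (Fin n → ℝ) → Bool)
    (hreliable : ∀ S : CollabSetting n, (⨅ i : Fin n, accAgent S i) ≤ accStrat S C)
    (X : Type) [Fintype X] (w : X → ℝ) (L : X → Bool) (P : Fin n → X → ℝ)
    (hw : ∀ x, 0 ≤ w x) (hW : 0 < ∑ x, w x)
    (hP : ∀ i x, 0 ≤ P i x ∧ P i x ≤ 1)
    (hcal : ∀ i p, ∑ x, (if P i x = p then w x * ((if L x = true then 1 else 0) - p) else 0) = 0) :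
    ∃ i, ∑ x, (if rnd (P i x) = L x then w x else 0)
      ≤ ∑ x, (if C (fun j => P j x) = L x then w x else 0) := by
  set W := ∑ x, w x with hWdef
  let S : CollabSetting n :=
    { X := X
      D := fun z => if z.2 = L z.1 then w z.1 / W else 0
      D_nonneg := by
        intro z
        split_ifs
        · exact div_nonneg (hw _) hW.le
        · exact le_rfl
      D_sum_one := by
        rw [Fintype.sum_prod_type]
        simp only [Finset.sum_ite_eq', Finset.mem_univ, if_true]
        rw [← Finset.sum_div, ← hWdef, div_self hW.ne']
      P := P
      P_mem := hP
      calibrated := by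
        intro i p _
        have h := hcal i p
        rw [← sub_eq_zero, Finset.mul_sum, ← Finset.sum_sub_distrib, Fintype.sum_prod_type]
        have h2 : (∑ x, (if P i x = p then w x * ((if L x = true then 1 else 0) - p) else 0)) / W
            = 0 := by rw [h, zero_div]
        rw [Finset.sum_div] at h2
        refine Eq.trans ?_ h2
        refine Finset.sum_congr rfl fun x _ => ?_
        rw [Fintype.sum_bool]
        by_cases h1 : P i x = p <;> cases hL : L x <;> simp [h1] <;> ring }
  have key : ∀ f : X → Bool, acc S f = (∑ x, (if f x = L x then w x else 0)) / W := by
    intro f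
    unfold acc
    change ∑ z : X × Bool, (if f z.1 = z.2 then (if z.2 = L z.1 then w z.1 / W else 0) else 0) = _
    rw [Fintype.sum_prod_type, Finset.sum_div]
    refine Finset.sum_congr rfl fun x _ => ?_
    rw [Fintype.sum_bool]
    cases hL : L x <;> cases hf : f x <;> simp
  have : Nonempty (Fin n) := ⟨⟨0, hn⟩⟩
  obtain ⟨i, hi⟩ := exists_eq_ciInf_of_finite (f := fun i : Fin n => accAgent S i)
  refine ⟨i, ?_⟩
  have h := hreliable S
  rw [← hi] at h
  unfold accAgent accStrat at h
  rw [key, key] at h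
  exact (div_le_div_iff_of_pos_right hW).1 h

/-- Mass of a balancing point. -/
noncomputable def balMass (l : Bool) (p : ℝ) : ℝ := if l = true then (1 - p) / p else p / (1 - p)

theorem balMass_nonneg (l : Bool) (p : ℝ) (h : p ∈ Set.Ioo (0 : ℝ) 1) : 0 ≤ balMass l p := by
  have h0 := h.1
  have h1 : 0 < 1 - p := by linarith [h.2]
  unfold balMass
  split_ifs <;> positivity

theorem balMass_le (l : Bool) (p : ℝ) (h : p ∈ Set.Ioo (0 : ℝ) 1) (hl : rnd p = l) :
    balMass l p ≤ 1 := by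
  have h0 := h.1
  have h1 : 0 < 1 - p := by linarith [h.2]
  subst hl
  unfold balMass rnd
  by_cases hp : (1/2 : ℝ) ≤ p
  · rw [if_pos hp, if_pos rfl, div_le_one h0]; linarith
  · rw [if_neg hp, if_neg (by simp), div_le_one h1]; linarith

theorem balMass_lt (l : Bool) (p : ℝ) (h : p ∈ Set.Ioo (0 : ℝ) 1) (hl : rnd p = l)
    (hne : p ≠ 1/2) : balMass l p < 1 := by
  have h0 := h.1
  have h1 : 0 < 1 - p := by linarith [h.2]
  subst hl
  unfold balMass rnd
  by_cases hp : (1/2 : ℝ) ≤ p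
  · have := lt_of_le_of_ne hp (Ne.symm hne)
    rw [if_pos hp, if_pos rfl, div_lt_one h0]; linarith
  · rw [if_neg hp, if_neg (by simp), div_lt_one h1]; linarith

theorem balMass_cal (l : Bool) (p : ℝ) (h : p ∈ Set.Ioo (0 : ℝ) 1) :
    ((if l = true then 1 else 0) - p) + balMass l p * ((if (!l) = true then 1 else 0) - p) = 0 := by
  have h0 := h.1.ne'
  have h1 : 1 - p ≠ 0 := by have := h.2; intro h; linarith
  cases l <;> simp [balMass] <;> field_simp <;> ring

/-- A reliable strategy must defer to some fixed agent away from 1/2. -/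
theorem stmt_3 (n : ℕ) (hn : 1 ≤ n) (C : (Fin n → ℝ) → Bool)
    (hreliable : ∀ S : CollabSetting n, (⨅ i : Fin n, accAgent S i) ≤ accStrat S C) :
    ∃ k : Fin n, ∀ p : Fin n → ℝ,
      (∀ i, p i ∈ Set.Ioo (0 : ℝ) 1) → p k ≠ 1/2 → C p = rnd (p k) := by
  by_contra hcon
  push Not at hcon
  choose q hq hne hC using hcon
  let l : Fin n → Bool := fun k => rnd (q k k)
  let w : Fin n × Option (Fin n) → ℝ := fun x =>
    match x.2 with
    | none => 1
    | some j => balMass (l x.1) (q x.1 j)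
  let L : Fin n × Option (Fin n) → Bool := fun x =>
    match x.2 with
    | none => l x.1
    | some _ => !(l x.1)
  let P : Fin n → Fin n × Option (Fin n) → ℝ := fun i x =>
    match x.2 with
    | none => q x.1 i
    | some j => if j = i then q x.1 i else (if (!(l x.1)) = true then 1 else 0)
  have hw : ∀ x, 0 ≤ w x := by
    rintro ⟨k, _ | j⟩
    · exact zero_le_one
    · exact balMass_nonneg _ _ (hq k j)
  obtain ⟨i, hi⟩ := weighted_setting n hn C hreliable (Fin n × Option (Fin n)) w L P hw
    (by
      refine Finset.sum_pos' (fun x _ => hw x) ⟨(⟨0, hn⟩, none), Finset.mem_univ _, ?_⟩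
      exact zero_lt_one)
    (by
      rintro i ⟨k, _ | j⟩
      · exact ⟨(hq k i).1.le, (hq k i).2.le⟩
      · change 0 ≤ (if j = i then q k i else (if (!(l k)) = true then (1:ℝ) else 0)) ∧
          (if j = i then q k i else (if (!(l k)) = true then (1:ℝ) else 0)) ≤ 1
        have h1 := (hq k i).1.le
        have h2 := (hq k i).2.le
        split_ifs <;> constructor <;> linarith)
    (by
      intro i p
      rw [Fintype.sum_prod_type]
      refine Finset.sum_eq_zero fun k _ => ?_
      rw [Fintype.sum_option, Finset.sum_eq_single i]
      · have hb := balMass_cal (l k) (q k i) (hq k i)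
        simp only [P, w, L, if_true, one_mul]
        by_cases hp : q k i = p
        · subst hp
          simpa using hb
        · simp [hp]
      · intro j _ hj
        simp only [P, w, L, if_neg hj]
        refine ite_eq_right_iff.2 fun h1 => ?_
        rw [h1, sub_self, mul_zero]
      · simp)
  refine absurd hi (not_le.2 ?_)
  rw [Fintype.sum_prod_type, Fintype.sum_prod_type]
  have hCbound : ∀ k, (∑ y : Option (Fin n),
      (if C (fun j => P j (k, y)) = L (k, y) then w (k, y) else 0)) ≤
      ∑ j, balMass (l k) (q k j) := by
    intro k
    rw [Fintype.sum_option]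
    have h0 : (if C (fun j => P j (k, none)) = L (k, none) then w (k, none) else 0) = 0 :=
      if_neg (hC k)
    rw [h0, zero_add]
    refine Finset.sum_le_sum fun j _ => ?_
    split_ifs
    · exact le_rfl
    · exact hw (k, some j)
  have hA : ∀ k, (∑ y : Option (Fin n),
      (if rnd (P i (k, y)) = L (k, y) then w (k, y) else 0)) =
      (∑ j, balMass (l k) (q k j)) + (if rnd (q k i) = l k then 1 - balMass (l k) (q k i) else 0) := by
    intro k
    rw [Fintype.sum_option, ← Finset.add_sum_erase _ _ (Finset.mem_univ i),
      ← Finset.add_sum_erase _ (fun j => balMass (l k) (q k j)) (Finset.mem_univ i)]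
    have he : ∑ j ∈ Finset.univ.erase i,
        (if rnd (P i (k, some j)) = L (k, some j) then w (k, some j) else 0) =
        ∑ j ∈ Finset.univ.erase i, balMass (l k) (q k j) := by
      refine Finset.sum_congr rfl fun j hj => ?_
      have hj := Finset.ne_of_mem_erase hj
      refine if_pos ?_
      simp only [P, L, if_neg hj]
      cases l k <;> norm_num [rnd]
    rw [he]
    simp only [P, L, w, if_true]
    cases hl : l k <;> cases hr : rnd (q k i) <;> simp <;> ring
  refine Finset.sum_lt_sum (fun k _ => (hCbound k).trans ?_)
    ⟨i, Finset.mem_univ _, (hCbound i).trans_lt ?_⟩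
  · rw [hA k]
    split_ifs with h
    · linarith [balMass_le (l k) (q k i) (hq k i) h]
    · simp
  · rw [hA i, if_pos rfl]
    linarith [balMass_lt (l i) (q i i) (hq i i) rfl (hne i)]
end

section
/- Let n ≥ 1 and let C : [0,1]^n → {0,1} be a collaboration strategy such that there exists k ∈ [n] with C(p_1, …, p_n) = round(p_k) for every (p_1, …, p_n) ∈ (0,1)^n with p_k ≠ 1/2. If acc_C(S) ≥ min_{i∈[n]} acc_i(S) for every collaboration setting S, then there exists α ∈ {0,1} such that C(p_1, …, p_n) = α for every (p_1, …, p_n) ∈ (0,1)^n with p_k = 1/2. -/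
open Finset

/-- Accuracy of the prediction `b` for a label that is `true` with probability `μ`. -/
noncomputable def gAcc (b : Bool) (μ : ℝ) : ℝ := if b = true then μ else 1 - μ

lemma rnd_true {p : ℝ} (h : 1/2 ≤ p) : rnd p = true := by
  unfold rnd; rw [if_pos h]

lemma rnd_false {p : ℝ} (h : p < 1/2) : rnd p = false := by
  unfold rnd; rw [if_neg (not_le.mpr h)]

/-- Unnormalised form of reliability: point masses `m` and conditional means `μ`. -/
lemma reliable_weights (n : ℕ) (hn : 1 ≤ n) (C : (Fin n → ℝ) → Bool)
    (hreliable : ∀ S : CollabSetting n, (⨅ i : Fin n, accAgent S i) ≤ accStrat S C)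
    (X : Type) [Fintype X] (m μ : X → ℝ) (hm : ∀ x, 0 ≤ m x)
    (hμ : ∀ x, 0 ≤ μ x ∧ μ x ≤ 1) (hpos : 0 < ∑ x, m x)
    (P : Fin n → X → ℝ) (hP : ∀ i x, 0 ≤ P i x ∧ P i x ≤ 1)
    (hcal : ∀ i v, ∑ x, (if P i x = v then m x * (μ x - v) else 0) = 0) :
    ∃ i, ∑ x, m x * gAcc (rnd (P i x)) (μ x)
      ≤ ∑ x, m x * gAcc (C (fun i => P i x)) (μ x) := by
  set T := ∑ x, m x with hT
  let D : X × Bool → ℝ := fun z => m z.1 * (if z.2 = true then μ z.1 else 1 - μ z.1) / T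
  have key : ∀ f : X × Bool → ℝ, ∑ z, f z = ∑ x, (f (x, true) + f (x, false)) := by
    intro f
    rw [Fintype.sum_prod_type]
    refine Finset.sum_congr rfl fun x _ => ?_
    simp
  let S : CollabSetting n :=
    { X := X
      D := D
      D_nonneg := by
        intro z
        have h1 := hm z.1
        have h2 := hμ z.1
        have h3 : 0 ≤ (if z.2 = true then μ z.1 else 1 - μ z.1) := by
          split_ifs <;> linarith
        exact div_nonneg (mul_nonneg h1 h3) hpos.le
      D_sum_one := by
        rw [key]
        have : ∀ x, D (x, true) + D (x, false) = m x / T := by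
          intro x; simp [D]; ring
        simp only [this]
        rw [← Finset.sum_div, ← hT, div_self hpos.ne']
      P := P
      P_mem := hP
      calibrated := by
        intro i p _
        rw [← sub_eq_zero, Finset.mul_sum, ← Finset.sum_sub_distrib, key]
        have h := hcal i p
        have h2 : ∑ x, (if P i x = p then m x * (μ x - p) else 0) / T = 0 := by
          rw [← Finset.sum_div, h, zero_div]
        refine Eq.trans ?_ h2
        refine Finset.sum_congr rfl fun x _ => ?_
        by_cases hx : P i x = p
        · simp [hx, D]; ring
        · simp [hx] }
  have hacc : ∀ Y : X → Bool, acc S Y = (∑ x, m x * gAcc (Y x) (μ x)) / T := by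
    intro Y
    show (∑ z : X × Bool, if Y z.1 = z.2 then D z else 0) = _
    rw [key, Finset.sum_div]
    refine Finset.sum_congr rfl fun x _ => ?_
    cases h : Y x <;> simp [h, D, gAcc]
  haveI : Nonempty (Fin n) := ⟨⟨0, hn⟩⟩
  obtain ⟨i, hi⟩ := exists_eq_ciInf_of_finite (f := fun i : Fin n => accAgent S i)
  refine ⟨i, ?_⟩
  have h := hreliable S
  rw [← hi] at h
  have h1 : accAgent S i = _ := hacc (fun x => rnd (P i x))
  have h2 : accStrat S C = _ := hacc (fun x => C (fun i => P i x))
  simp only [h1, h2] at h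
  exact (div_le_div_iff_of_pos_right hpos).mp h

lemma no_disagree (n : ℕ) (hn : 1 ≤ n) (C : (Fin n → ℝ) → Bool) (k : Fin n)
    (hdefer : ∀ p : Fin n → ℝ,
      (∀ i, p i ∈ Set.Ioo (0 : ℝ) 1) → p k ≠ 1/2 → C p = rnd (p k))
    (hreliable : ∀ S : CollabSetting n, (⨅ i : Fin n, accAgent S i) ≤ accStrat S C)
    (a b : Fin n → ℝ) (ha : ∀ i, a i ∈ Set.Ioo (0 : ℝ) 1) (hb : ∀ i, b i ∈ Set.Ioo (0 : ℝ) 1)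
    (hak : a k = 1/2) (hbk : b k = 1/2) (hCa : C a = true) (hCb : C b = false) : False := by
  obtain ⟨q, hqa, hqb, hq2, hq1⟩ : ∃ q : ℝ, (∀ i, a i < q) ∧ (∀ i, 1 - b i < q) ∧
      1/2 < q ∧ q < 1 := by
    have h1 : ∀ c : ℝ, c < 1 → ∀ᶠ q in nhdsWithin (1:ℝ) (Set.Iio 1), c < q := fun c hc =>
      nhdsWithin_le_nhds (lt_mem_nhds hc)
    have h2 : ∀ᶠ q in nhdsWithin (1:ℝ) (Set.Iio 1), ∀ i, a i < q :=
      Filter.eventually_all.mpr fun i => h1 _ (ha i).2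
    have h3 : ∀ᶠ q in nhdsWithin (1:ℝ) (Set.Iio 1), ∀ i, 1 - b i < q :=
      Filter.eventually_all.mpr fun i => h1 _ (by linarith [(hb i).1])
    have h4 := h1 (1/2) (by norm_num)
    have h5 : ∀ᶠ q in nhdsWithin (1:ℝ) (Set.Iio 1), q < 1 := self_mem_nhdsWithin
    exact (h2.and (h3.and (h4.and h5))).exists
  let w : Fin n → ℝ := fun j => a j / (q - a j)
  let u : Fin n → ℝ := fun j => (1 - b j) / (b j - (1 - q))
  have hw : ∀ j, 0 ≤ w j := fun j =>
    div_nonneg (ha j).1.le (by linarith [hqa j])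
  have hu : ∀ j, 0 ≤ u j := fun j =>
    div_nonneg (by linarith [(hb j).2]) (by linarith [hqb j])
  have hwq : ∀ j, w j * (q - a j) = a j := fun j =>
    div_mul_cancel₀ _ (by linarith [hqa j])
  have huq : ∀ j, u j * (b j - (1 - q)) = 1 - b j := fun j =>
    div_mul_cancel₀ _ (by linarith [hqb j])
  let W : ℝ := ∑ j, w j + ∑ j, u j
  have hW : 0 ≤ W := add_nonneg (Finset.sum_nonneg fun j _ => hw j)
    (Finset.sum_nonneg fun j _ => hu j)
  let B : ℝ := (W + 1) / (2 * q - 1)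
  have hBq : B * (2 * q - 1) = W + 1 := div_mul_cancel₀ _ (by linarith)
  have hB : 0 ≤ B := div_nonneg (by linarith) (by linarith)
  let r : ℝ := (1 + q) / 3
  have hr : 1/2 < r ∧ r < 1 := by constructor <;> simp only [r] <;> linarith
  let m : Fin 4 ⊕ (Fin n ⊕ Fin n) → ℝ :=
    Sum.elim ![1, 1, 2 * B, B] (Sum.elim w u)
  let μ : Fin 4 ⊕ (Fin n ⊕ Fin n) → ℝ :=
    Sum.elim ![0, 1, q, 1 - q] (Sum.elim (fun _ => q) (fun _ => 1 - q))
  let P : Fin n → Fin 4 ⊕ (Fin n ⊕ Fin n) → ℝ := fun i =>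
    Sum.elim ![a i, b i, if i = k then r else q, if i = k then r else 1 - q]
      (Sum.elim (fun j => if j = i ∧ i ≠ k then a i else q)
        (fun j => if j = i ∧ i ≠ k then b i else 1 - q))
  have hPm : ∀ i x, P i x ∈ Set.Ioo (0:ℝ) 1 := by
    have hq : q ∈ Set.Ioo (0:ℝ) 1 := ⟨by linarith, hq1⟩
    have hq' : 1 - q ∈ Set.Ioo (0:ℝ) 1 := ⟨by linarith, by linarith⟩
    have hr' : r ∈ Set.Ioo (0:ℝ) 1 := ⟨by linarith [hr.1], hr.2⟩
    rintro i (x | x | x)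
    · fin_cases x
      · exact ha i
      · exact hb i
      · show (if i = k then r else q) ∈ _
        split_ifs <;> assumption
      · show (if i = k then r else 1 - q) ∈ _
        split_ifs <;> assumption
    · show (if x = i ∧ i ≠ k then a i else q) ∈ _
      split_ifs
      · exact ha i
      · exact hq
    · show (if x = i ∧ i ≠ k then b i else 1 - q) ∈ _
      split_ifs
      · exact hb i
      · exact hq'
  obtain ⟨i, hi⟩ := reliable_weights n hn C hreliable _ m μ
    (by
      rintro (x | x | x)
      · fin_cases x <;> simp [m] <;> linarith
      · exact hw x
      · exact hu x)
    (by
      rintro (x | x | x)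
      · fin_cases x <;> simp [μ] <;> (try constructor) <;> linarith
      · exact ⟨by simp only [μ, Sum.elim_inl, Sum.elim_inr]; linarith, hq1.le⟩
      · constructor <;> simp only [μ, Sum.elim_inr] <;> linarith)
    (by
      simp only [Fintype.sum_sum_type, Fin.sum_univ_four, m, Sum.elim_inl, Sum.elim_inr]
      simp
      change 0 < 1 + 1 + 2 * B + B + W
      linarith)
    P (fun i x => ⟨(hPm i x).1.le, (hPm i x).2.le⟩)
    (by
      intro i v
      have hc : ∑ j, (if (if j = i ∧ i ≠ k then a i else q) = v then w j * (q - v) else 0)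
          = if i ≠ k ∧ a i = v then a i else 0 := by
        rw [Finset.sum_eq_single i]
        · by_cases hik : i = k
          · simp only [hik]
            simp
            intro h; right; linarith
          · simp only [hik, ne_eq, not_false_eq_true, and_self, true_and, if_true]
            refine if_ctx_congr Iff.rfl (fun h => ?_) (fun _ => rfl)
            rw [← h]; exact hwq i
        · intro j _ hj
          simp only [hj]
          simp
          intro h; right; linarith
        · simp
      have hd : ∑ j, (if (if j = i ∧ i ≠ k then b i else 1 - q) = v
            then u j * (1 - q - v) else 0)
          = if i ≠ k ∧ b i = v then b i - 1 else 0 := by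
        rw [Finset.sum_eq_single i]
        · by_cases hik : i = k
          · simp only [hik]
            simp
            intro h; right; linarith
          · simp only [hik, ne_eq, not_false_eq_true, and_self, true_and, if_true]
            refine if_ctx_congr Iff.rfl (fun h => ?_) (fun _ => rfl)
            rw [← h]; linarith [huq i]
        · intro j _ hj
          simp only [hj]
          simp
          intro h; right; linarith
        · simp
      rw [Fintype.sum_sum_type, Fintype.sum_sum_type, Fin.sum_univ_four]
      change (if a i = v then 1 * (0 - v) else 0) + (if b i = v then 1 * (1 - v) else 0)
        + (if (if i = k then r else q) = v then 2 * B * (q - v) else 0)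
        + (if (if i = k then r else 1 - q) = v then B * (1 - q - v) else 0)
        + (∑ j, (if (if j = i ∧ i ≠ k then a i else q) = v then w j * (q - v) else 0)
          + ∑ j, (if (if j = i ∧ i ≠ k then b i else 1 - q) = v
            then u j * (1 - q - v) else 0)) = 0
      rw [hc, hd]
      by_cases hik : i = k
      · subst hik
        rw [hak, hbk]
        have hrv : r = v → 2 * B * (q - v) + B * (1 - q - v) = 0 := by
          intro h; rw [← h]; simp only [r]; ring
        simp only [ne_eq, not_true_eq_false, false_and, if_true, if_false]
        split_ifs with h1 h2 h2
        · linarith [hrv h2]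
        · linarith
        · linarith [hrv h2]
        · linarith
      · simp only [ne_eq, hik, not_false_eq_true, true_and, if_false]
        have e1 : (if q = v then 2 * B * (q - v) else 0) = 0 := by
          split_ifs with h
          · rw [h]; ring
          · rfl
        have e2 : (if 1 - q = v then B * (1 - q - v) else 0) = 0 := by
          split_ifs with h
          · rw [h]; ring
          · rfl
        rw [e1, e2]
        split_ifs <;> linarith)
  -- accuracy comparison
  have hCr : ∀ x, P k x ≠ 1/2 → C (fun i => P i x) = rnd (P k x) := fun x hx =>
    hdefer _ (fun i => hPm i x) hx
  have c2 : C (fun i => P i (Sum.inl 2)) = true := by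
    have e : P k (Sum.inl 2) = r := by simp [P]
    rw [hCr _ (by rw [e]; linarith [hr.1]), e, rnd_true hr.1.le]
  have c3 : C (fun i => P i (Sum.inl 3)) = true := by
    have e : P k (Sum.inl 3) = r := by simp [P]
    rw [hCr _ (by rw [e]; linarith [hr.1]), e, rnd_true hr.1.le]
  have cc : ∀ j, C (fun i => P i (Sum.inr (Sum.inl j))) = true := by
    intro j
    have e : P k (Sum.inr (Sum.inl j)) = q := by simp [P]
    rw [hCr _ (by rw [e]; linarith), e, rnd_true hq2.le]
  have cd : ∀ j, C (fun i => P i (Sum.inr (Sum.inr j))) = false := by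
    intro j
    have e : P k (Sum.inr (Sum.inr j)) = 1 - q := by simp [P]
    rw [hCr _ (by rw [e]; linarith), e, rnd_false (by linarith)]
  have c0 : C (fun i => P i (Sum.inl 0)) = true := hCa
  have c1 : C (fun i => P i (Sum.inl 1)) = false := hCb
  rw [Fintype.sum_sum_type, Fintype.sum_sum_type, Fin.sum_univ_four,
    Fintype.sum_sum_type, Fintype.sum_sum_type, Fin.sum_univ_four] at hi
  simp only [c0, c1, c2, c3, cc, cd] at hi
  change 1 * gAcc (rnd (a i)) 0 + 1 * gAcc (rnd (b i)) 1
    + 2 * B * gAcc (rnd (if i = k then r else q)) q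
    + B * gAcc (rnd (if i = k then r else 1 - q)) (1 - q)
    + (∑ j, w j * gAcc (rnd (if j = i ∧ i ≠ k then a i else q)) q
      + ∑ j, u j * gAcc (rnd (if j = i ∧ i ≠ k then b i else 1 - q)) (1 - q))
    ≤ 1 * gAcc true 0 + 1 * gAcc false 1 + 2 * B * gAcc true q + B * gAcc true (1 - q)
      + (∑ j, w j * gAcc true q + ∑ j, u j * gAcc false (1 - q)) at hi
  by_cases hik : i = k
  · subst hik
    simp only [ne_eq, not_true_eq_false, and_false, if_true, if_false, hak, hbk,
      rnd_true hr.1.le, rnd_true hq2.le, rnd_true (le_refl (1/2 : ℝ)),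
      rnd_false (show 1 - q < 1/2 by linarith)] at hi
    simp only [gAcc, if_true] at hi
    norm_num at hi
  · simp only [hik, if_false, rnd_true hq2.le,
      rnd_false (show 1 - q < 1/2 by linarith)] at hi
    have g0 : ∀ s t, 0 ≤ t → t ≤ 1 → 0 ≤ gAcc s t := by
      intro s t h1 h2
      unfold gAcc; split_ifs <;> linarith
    have n1 := g0 (rnd (a i)) 0 le_rfl zero_le_one
    have n2 := g0 (rnd (b i)) 1 zero_le_one le_rfl
    have n3 := Finset.sum_nonneg (s := Finset.univ) (fun j _ => mul_nonneg (hw j)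
      (g0 (rnd (if j = i ∧ i ≠ k then a i else q)) q (by linarith) hq1.le))
    have n4 := Finset.sum_nonneg (s := Finset.univ) (fun j _ => mul_nonneg (hu j)
      (g0 (rnd (if j = i ∧ i ≠ k then b i else 1 - q)) (1 - q) (by linarith) (by linarith)))
    have m1 : ∑ j, w j * gAcc true q ≤ ∑ j, w j := Finset.sum_le_sum fun j _ =>
      mul_le_of_le_one_right (hw j) hq1.le
    have m2 : ∑ j, u j * gAcc false (1 - q) ≤ ∑ j, u j := Finset.sum_le_sum fun j _ =>
      mul_le_of_le_one_right (hu j) (by simp [gAcc]; linarith)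
    have hWd : W = ∑ j, w j + ∑ j, u j := rfl
    have t1 : gAcc true 0 = 0 := by simp [gAcc]
    have t2 : gAcc false 1 = 0 := by simp [gAcc]
    have t3 : gAcc true (1 - q) = 1 - q := by simp [gAcc]
    have t4 : gAcc false (1 - q) = q := by simp [gAcc]
    rw [t1, t2, t3] at hi
    have hi2 : B * gAcc false (1 - q) = B * q := by rw [t4]
    simp only [hik, if_false, ne_eq, not_false_eq_true, and_true] at hi n3 n4
    nlinarith

/-- A reliable deferring strategy is constant when the deferred agent predicts 1/2. -/
theorem stmt_4 (n : ℕ) (hn : 1 ≤ n) (C : (Fin n → ℝ) → Bool) (k : Fin n)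
    (hdefer : ∀ p : Fin n → ℝ,
      (∀ i, p i ∈ Set.Ioo (0 : ℝ) 1) → p k ≠ 1/2 → C p = rnd (p k))
    (hreliable : ∀ S : CollabSetting n, (⨅ i : Fin n, accAgent S i) ≤ accStrat S C) :
    ∃ α : Bool, ∀ p : Fin n → ℝ,
      (∀ i, p i ∈ Set.Ioo (0 : ℝ) 1) → p k = 1/2 → C p = α := by
  by_contra hcon
  push Not at hcon
  obtain ⟨b, hb, hbk, hCb⟩ := hcon true
  obtain ⟨a, ha, hak, hCa⟩ := hcon false
  exact no_disagree n hn C k hdefer hreliable a b ha hb hak hbk (by simpa using hCa)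
    (by simpa using hCb)
end

section
/- Let n ≥ 2, let k ∈ [n], and let C : [0,1]^n → {0,1} be a collaboration strategy such that C(p_1, …, p_n) = round(p_k) for every (p_1, …, p_n) ∈ (0,1)^n with p_k ≠ 1/2. Then there exists a collaboration setting S_1 such that acc_C(S_1) = acc_k(S_1) and acc_C(S_1) < acc_i(S_1) for every i ∈ [n] with i ≠ k. -/
open Finset

/-- The joint distribution of the example: two equally likely points, with conditional
probabilities `4/5` and `2/5` of the label being `true`. -/
noncomputable def exD : Bool × Bool → ℝ
  | (true, true) => 4/10
  | (true, false) => 1/10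
  | (false, true) => 2/10
  | (false, false) => 3/10

/-- Agent `k` predicts the constant mean `3/5`, the others the conditional probability. -/
noncomputable def exP {n : ℕ} (k i : Fin n) (x : Bool) : ℝ :=
  if i = k then 3/5 else if x = true then 4/5 else 2/5

/-- The example setting. -/
noncomputable def exS {n : ℕ} (k : Fin n) : CollabSetting n where
  X := Bool
  D := exD
  D_nonneg := by
    rintro ⟨_ | _, _ | _⟩ <;> norm_num [exD]
  D_sum_one := by
    simp only [Fintype.sum_prod_type, Fintype.sum_bool, exD]; norm_num
  P := exP k
  P_mem := by
    intro i x
    unfold exP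
    split_ifs <;> norm_num
  calibrated := by
    intro i p _
    simp only [Fintype.sum_prod_type, Fintype.sum_bool, exD, exP]
    by_cases hi : i = k
    · by_cases h : (3/5 : ℝ) = p
      · subst h; norm_num [hi]
      · simp [hi, h]
    · by_cases h : (4/5 : ℝ) = p
      · subst h; norm_num [hi]
      · by_cases h' : (2/5 : ℝ) = p
        · subst h'; norm_num [hi]
        · simp [hi, h, h']

/-- For a strategy deferring to agent k, there is a setting where
C ties agent k and is strictly worse than every other agent. -/
theorem stmt_5 (n : ℕ) (hn : 2 ≤ n) (k : Fin n) (C : (Fin n → ℝ) → Bool)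
    (hdefer : ∀ p : Fin n → ℝ,
      (∀ i, p i ∈ Set.Ioo (0 : ℝ) 1) → p k ≠ 1/2 → C p = rnd (p k)) :
    ∃ S : CollabSetting n,
      accStrat S C = accAgent S k ∧
      (∀ i : Fin n, i ≠ k → accStrat S C < accAgent S i) := by
  have hC : ∀ x : Bool, C (fun i => exP k i x) = true := by
    intro x
    rw [hdefer]
    · norm_num [exP, rnd]
    · intro i
      simp only [exP, Set.mem_Ioo]
      split_ifs <;> norm_num
    · norm_num [exP]
  have h1 : accStrat (exS k) C = 3/5 := by
    change (∑ z : Bool × Bool, if C (fun i => exP k i z.1) = z.2 then exD z else 0) = 3/5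
    simp only [hC, Fintype.sum_prod_type, Fintype.sum_bool, exD]
    norm_num
  have h2 : ∀ i, accAgent (exS k) i = if i = k then 3/5 else 7/10 := by
    intro i
    change (∑ z : Bool × Bool, if rnd (exP k i z.1) = z.2 then exD z else 0) = _
    simp only [Fintype.sum_prod_type, Fintype.sum_bool, exD, exP, rnd]
    by_cases hi : i = k <;> norm_num [hi]
  refine ⟨exS k, ?_, ?_⟩
  · rw [h1, h2, if_pos rfl]
  · intro i hi
    rw [h1, h2, if_neg hi]
    norm_num
end

section
/- Let n ≥ 1, let k ∈ [n], and let C : [0,1]^n → {0,1} be a collaboration strategy. Suppose there exist two tuples (p_1, …, p_n), (q_1, …, q_n) ∈ (0,1)^n with p_k = q_k = 1/2 such that C(p_1, …, p_n) = 1 and C(q_1, …, q_n) = 0. Then there exists a collaboration setting S_2 such that acc_C(S_2) < acc_k(S_2). -/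
open Finset

theorem ite_le_self_aux {c : Prop} [Decidable c] {a : ℝ} (h : 0 ≤ a) : (if c then a else 0) ≤ a := by
  split_ifs
  · exact le_rfl
  · exact h

/-- A setting with deterministic labels, from unnormalized weights. -/
theorem exists_setting {n : ℕ} (X : Type) [Fintype X] (w : X → ℝ) (hw : ∀ x, 0 ≤ w x)
    (hpos : 0 < ∑ x, w x) (l : X → Bool) (P : Fin n → X → ℝ)
    (hP : ∀ i x, 0 ≤ P i x ∧ P i x ≤ 1)
    (hcal : ∀ i v, ∑ x, (if P i x = v then w x * ((if l x = true then 1 else 0) - v) else 0) = 0)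
    (k : Fin n) (C : (Fin n → ℝ) → Bool)
    (hacc : ∑ x, (if C (fun i => P i x) = l x then w x else 0)
      < ∑ x, (if rnd (P k x) = l x then w x else 0)) :
    ∃ S : CollabSetting n, accStrat S C < accAgent S k := by
  have key : ∀ g : X → Bool → Prop, ∀ [∀ x y, Decidable (g x y)],
      ∑ z : X × Bool, (if g z.1 z.2 then (if z.2 = l z.1 then w z.1 / ∑ x, w x else 0) else 0)
        = (∑ x, if g x (l x) then w x else 0) / ∑ x, w x := by
    intro g _
    rw [Fintype.sum_prod_type, Finset.sum_div]
    refine Finset.sum_congr rfl fun x _ => ?_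
    rw [Fintype.sum_bool]
    cases h : l x <;> simp [ite_div]
  refine ⟨{ X := X
            D := fun z => if z.2 = l z.1 then w z.1 / ∑ x, w x else 0
            D_nonneg := ?_
            D_sum_one := ?_
            P := P
            P_mem := hP
            calibrated := ?_ }, ?_⟩
  · intro z
    split_ifs
    · exact div_nonneg (hw _) hpos.le
    · exact le_rfl
  · have := key (fun _ _ => True)
    simp only [if_true] at this
    rw [this, div_self hpos.ne']
  · intro i v _
    rw [key (fun x _ => P i x = v), key (fun x y => P i x = v ∧ y = true), ← mul_div_assoc]
    congr 1
    rw [← sub_eq_zero, Finset.mul_sum, ← Finset.sum_sub_distrib]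
    refine (Finset.sum_congr rfl fun x _ => ?_).trans (hcal i v)
    by_cases h1 : P i x = v <;> by_cases h2 : l x = true <;> simp [h1, h2] <;> ring
  · unfold accStrat accAgent acc
    dsimp only
    rw [key (fun x y => C (fun i => P i x) = y), key (fun x y => rnd (P k x) = y)]
    exact div_lt_div_of_pos_right hacc hpos

/-- If C takes both values on tuples where agent k predicts 1/2,
there is a setting where C is strictly worse than agent k. -/
theorem stmt_6 (n : ℕ) (hn : 1 ≤ n) (k : Fin n) (C : (Fin n → ℝ) → Bool)
    (p q : Fin n → ℝ)
    (hp : ∀ i, p i ∈ Set.Ioo (0 : ℝ) 1) (hq : ∀ i, q i ∈ Set.Ioo (0 : ℝ) 1)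
    (hpk : p k = 1/2) (hqk : q k = 1/2)
    (hCp : C p = true) (hCq : C q = false) :
    ∃ S : CollabSetting n, accStrat S C < accAgent S k := by
  classical
  have hp0 := fun i => (hp i).1
  have hp1 := fun i => sub_pos.2 (hp i).2
  have hq0 := fun i => (hq i).1
  have hq1 := fun i => sub_pos.2 (hq i).2
  let wt : Option (Fin n) → ℝ := fun o => o.elim 1 fun j => if j = k then 0 else p j / (1 - p j)
  let wf : Option (Fin n) → ℝ := fun o => o.elim 1 fun j => if j = k then 0 else (1 - q j) / q j
  let Pt : Fin n → Option (Fin n) → ℝ := fun i o => o.elim (p i) fun j => if j = i then p i else 1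
  let Pf : Fin n → Option (Fin n) → ℝ := fun i o => o.elim (q i) fun j => if j = i then q i else 0
  have hwt : ∀ o, 0 ≤ wt o := by
    rintro (_ | j)
    · simp [wt]
    · simp only [wt, Option.elim]
      split_ifs
      · exact le_rfl
      · exact (div_pos (hp0 j) (hp1 j)).le
  have hwf : ∀ o, 0 ≤ wf o := by
    rintro (_ | j)
    · simp [wf]
    · simp only [wf, Option.elim]
      split_ifs
      · exact le_rfl
      · exact (div_pos (hq1 j) (hq0 j)).le
  refine exists_setting (Option (Fin n) ⊕ Option (Fin n)) (Sum.elim wt wf) ?_ ?_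
    (Sum.elim (fun o => o.isSome) (fun o => o.isNone)) (fun i => Sum.elim (Pt i) (Pf i)) ?_ ?_ k C ?_
  · rintro (o | o)
    · exact hwt o
    · exact hwf o
  · refine Finset.sum_pos' ?_ ⟨Sum.inl none, Finset.mem_univ _, by simp [wt]⟩
    rintro (o | o) _
    · exact hwt o
    · exact hwf o
  · rintro i (o | o) <;> rcases o with _ | j <;> simp only [Sum.elim_inl, Sum.elim_inr, Pt, Pf, Option.elim]
    · exact ⟨(hp i).1.le, (hp i).2.le⟩
    · split_ifs
      · exact ⟨(hp i).1.le, (hp i).2.le⟩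
      · norm_num
    · exact ⟨(hq i).1.le, (hq i).2.le⟩
    · split_ifs
      · exact ⟨(hq i).1.le, (hq i).2.le⟩
      · norm_num
  · intro i v
    rw [Fintype.sum_sum_type, Fintype.sum_option, Fintype.sum_option]
    rw [Finset.sum_eq_single i, Finset.sum_eq_single i]
    · by_cases hik : i = k
      · subst hik
        simp only [Sum.elim_inl, Sum.elim_inr, Pt, Pf, wt, wf, Option.elim, hpk, hqk]
        by_cases hv : (1/2 : ℝ) = v
        · subst hv; norm_num
        · simp only [hv, if_false]; simp
      · have e1 := (hp1 i).ne'
        have e2 := (hq0 i).ne'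
        simp only [Sum.elim_inl, Sum.elim_inr, Pt, Pf, wt, wf, Option.elim, hik, if_true, if_false]
        by_cases h1 : p i = v <;> by_cases h2 : q i = v <;>
          simp only [h1, h2, if_true, if_false] at e1 e2 ⊢ <;> simp <;> field_simp <;> ring
    · intro j _ hj
      by_cases hv : (0 : ℝ) = v
      · subst hv; simp
      · simp [Pf, hj, hv]
    · simp
    · intro j _ hj
      by_cases hv : (1 : ℝ) = v
      · subst hv; simp
      · simp [Pt, hj, hv]
    · simp
  · have e1 : (fun i => Pt i none) = p := rfl
    have e2 : (fun i => Pf i none) = q := rfl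
    refine Finset.sum_lt_sum ?_ ⟨Sum.inr none, Finset.mem_univ _, ?_⟩
    · rintro (o | o) _ <;> rcases o with _ | j
      · simp [e1, hCp, Pt, hpk, rnd]
      · by_cases hj : j = k
        · simp [wt, hj]
        · have h := hwt (some j)
          have : rnd (Pt k (some j)) = true := by simp [Pt, hj, rnd]; norm_num
          simp only [Sum.elim_inl, this, Option.isSome_some, if_true]
          exact ite_le_self_aux h
      · simp [e2, hCq, Pf, hqk, rnd, wf]
      · by_cases hj : j = k
        · simp [wf, hj]
        · have h := hwf (some j)
          have : rnd (Pf k (some j)) = false := by simp [Pf, hj, rnd]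
          simp only [Sum.elim_inr, this, Option.isNone_some, if_true]
          exact ite_le_self_aux h
    · simp [e2, hCq, Pf, hqk, rnd, wf]
end

section
/- Let n ≥ 1 and let C : [0,1]^n → {0,1} be a collaboration strategy. Suppose that for every k ∈ [n] there exists a collaboration setting S_k such that acc_k(S_k) > acc_C(S_k) and acc_i(S_k) ≥ acc_C(S_k) for all i ∈ [n]. Then there exists a collaboration setting S such that acc_i(S) > acc_C(S) for every i ∈ [n]; in particular, C is not reliable. -/
open Finset

theorem sum_sigma_prod {n : ℕ} (X : Fin n → Type) [∀ k, Fintype (X k)]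
    (f : (Σ k, X k) × Bool → ℝ) :
    ∑ z, f z = ∑ k, ∑ w : X k × Bool, f (⟨k, w.1⟩, w.2) := by
  rw [Fintype.sum_prod_type, Fintype.sum_sigma]
  refine Finset.sum_congr rfl fun k _ => ?_
  rw [Fintype.sum_prod_type]

/-- The uniform mixture of `n` settings on the disjoint union of their domains. -/
noncomputable def glue {n : ℕ} (hn : 1 ≤ n) (S : Fin n → CollabSetting n) : CollabSetting n where
  X := Σ k, (S k).X
  D := fun z => (1 / (n : ℝ)) * (S z.1.1).D (z.1.2, z.2)
  D_nonneg := fun z => mul_nonneg (by positivity) ((S z.1.1).D_nonneg _)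
  D_sum_one := by
    rw [sum_sigma_prod (fun k => (S k).X)]
    have hn' : (n : ℝ) ≠ 0 := by
      have : n ≠ 0 := by omega
      exact_mod_cast this
    simp only [← Finset.mul_sum, Prod.mk.eta, (S _).D_sum_one]
    simp [hn']
  P := fun i x => (S x.1).P i x.2
  P_mem := fun i x => (S x.1).P_mem i x.2
  calibrated := by
    intro i p _
    rw [sum_sigma_prod (fun k => (S k).X), sum_sigma_prod (fun k => (S k).X), Finset.mul_sum]
    refine Finset.sum_congr rfl fun k _ => ?_
    have h := calibrated_all (S k) i p
    simp only [← mul_ite_zero, ← Finset.mul_sum, Prod.mk.eta]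
    rw [h]
    ring

theorem acc_glue {n : ℕ} (hn : 1 ≤ n) (S : Fin n → CollabSetting n)
    (g : (Fin n → ℝ) → Bool) :
    acc (glue hn S) (fun x => g (fun i => (glue hn S).P i x))
      = (1 / (n : ℝ)) * ∑ k, acc (S k) (fun x => g (fun i => (S k).P i x)) := by
  unfold acc
  refine (sum_sigma_prod (fun k => (S k).X) _).trans ?_
  rw [Finset.mul_sum]
  refine Finset.sum_congr rfl fun k _ => ?_
  rw [Finset.mul_sum]
  refine Finset.sum_congr rfl fun w _ => ?_
  rw [mul_ite_zero]
  rfl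

/-- Gluing per-agent adversarial settings yields a setting where C is
strictly worse than every agent; in particular C is not reliable. -/
theorem stmt_7 (n : ℕ) (hn : 1 ≤ n) (C : (Fin n → ℝ) → Bool)
    (hadv : ∀ k : Fin n, ∃ S : CollabSetting n,
      accStrat S C < accAgent S k ∧ (∀ i : Fin n, accStrat S C ≤ accAgent S i)) :
    (∃ S : CollabSetting n, ∀ i : Fin n, accStrat S C < accAgent S i) ∧
    ¬ (∀ S : CollabSetting n, (⨅ i : Fin n, accAgent S i) ≤ accStrat S C) := by
  choose S hS hS' using hadv
  have key : ∀ i : Fin n, accStrat (glue hn S) C < accAgent (glue hn S) i := by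
    intro i
    have h1 : accStrat (glue hn S) C = _ := acc_glue hn S C
    have h2 : accAgent (glue hn S) i = _ := acc_glue hn S (fun v => rnd (v i))
    rw [h1, h2]
    have hpos : (0 : ℝ) < 1 / (n : ℝ) := by
      have : (0 : ℝ) < n := by exact_mod_cast hn
      positivity
    refine mul_lt_mul_of_pos_left ?_ hpos
    exact Finset.sum_lt_sum (fun k _ => hS' k i) ⟨i, Finset.mem_univ i, hS i⟩
  refine ⟨⟨glue hn S, key⟩, fun h => ?_⟩
  haveI : Nonempty (Fin n) := ⟨⟨0, hn⟩⟩
  obtain ⟨i, hi⟩ := exists_eq_ciInf_of_finite (f := fun i : Fin n => accAgent (glue hn S) i)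
  have h3 := h (glue hn S)
  rw [← hi] at h3
  exact absurd (key i) (not_lt.mpr h3)
end

section
/- Let n ≥ 1 and fix k ∈ [n]. Define the collaboration strategy C : [0,1]^n → {0,1} by: C(p_1, …, p_n) = 1 if p_i = 1 for some i ∈ [n]; otherwise C(p_1, …, p_n) = 0 if p_i = 0 for some i ∈ [n]; otherwise C(p_1, …, p_n) = round(p_k). Then acc_C(S) ≥ acc_k(S) for every collaboration setting S; in particular, C is reliable. -/
open Finset

theorem aux_one {n : ℕ} (S : CollabSetting n) (i : Fin n) (x : S.X) (h : S.P i x = 1) :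
    S.D (x, false) = 0 := by
  have hnn : ∀ z ∈ (Finset.univ : Finset (S.X × Bool)),
      0 ≤ (if S.P i z.1 = 1 then S.D z else 0) := by
    intro z _
    have := S.D_nonneg z
    split_ifs <;> simp [this]
  rcases (Finset.sum_nonneg hnn).lt_or_eq with hp | hp
  · have hc := S.calibrated i 1 hp
    rw [one_mul] at hc
    have hle : ∀ z ∈ (Finset.univ : Finset (S.X × Bool)),
        (if S.P i z.1 = 1 ∧ z.2 = true then S.D z else 0)
          ≤ (if S.P i z.1 = 1 then S.D z else 0) := by
      intro z _
      have := S.D_nonneg z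
      by_cases h1 : S.P i z.1 = 1 <;> by_cases h2 : z.2 = true <;> simp [h1, h2, this]
    have := (Finset.sum_eq_sum_iff_of_le hle).1 hc (x, false) (Finset.mem_univ _)
    simpa [h] using this.symm
  · have := (Finset.sum_eq_zero_iff_of_nonneg hnn).1 hp.symm (x, false) (Finset.mem_univ _)
    simpa [h] using this

theorem aux_zero {n : ℕ} (S : CollabSetting n) (i : Fin n) (x : S.X) (h : S.P i x = 0) :
    S.D (x, true) = 0 := by
  have hnn : ∀ z ∈ (Finset.univ : Finset (S.X × Bool)),
      0 ≤ (if S.P i z.1 = 0 then S.D z else 0) := by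
    intro z _
    have := S.D_nonneg z
    split_ifs <;> simp [this]
  have hnn2 : ∀ z ∈ (Finset.univ : Finset (S.X × Bool)),
      0 ≤ (if S.P i z.1 = 0 ∧ z.2 = true then S.D z else 0) := by
    intro z _
    have := S.D_nonneg z
    split_ifs <;> simp [this]
  rcases (Finset.sum_nonneg hnn).lt_or_eq with hp | hp
  · have hc := S.calibrated i 0 hp
    rw [zero_mul] at hc
    have := (Finset.sum_eq_zero_iff_of_nonneg hnn2).1 hc (x, true) (Finset.mem_univ _)
    simpa [h] using this
  · have := (Finset.sum_eq_zero_iff_of_nonneg hnn).1 hp.symm (x, true) (Finset.mem_univ _)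
    simpa [h] using this

open Classical in
/-- Deferring to agent k except when some agent is certain performs at
least as well as agent k, and is in particular reliable. -/
theorem stmt_12 (n : ℕ) (hn : 1 ≤ n) (k : Fin n) (C : (Fin n → ℝ) → Bool)
    (hC : ∀ p : Fin n → ℝ,
      C p = if ∃ i, p i = 1 then true
            else if ∃ i, p i = 0 then false
            else rnd (p k)) :
    (∀ S : CollabSetting n, accAgent S k ≤ accStrat S C) ∧
    (∀ S : CollabSetting n, (⨅ i : Fin n, accAgent S i) ≤ accStrat S C) := by
  have key : ∀ S : CollabSetting n, accAgent S k ≤ accStrat S C := by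
    intro S
    unfold accAgent accStrat acc
    apply Finset.sum_le_sum
    rintro ⟨x, y⟩ _
    have hD := S.D_nonneg (x, y)
    simp only [hC]
    by_cases h1 : ∃ i, S.P i x = 1
    · obtain ⟨i, hi⟩ := id h1
      have := aux_one S i x hi
      cases y
      · simp [this]
      · rw [if_pos h1, if_pos rfl]
        split_ifs <;> simp [hD]
    · rw [if_neg h1]
      by_cases h0 : ∃ i, S.P i x = 0
      · obtain ⟨i, hi⟩ := id h0
        have := aux_zero S i x hi
        cases y
        · rw [if_pos h0, if_pos rfl]
          split_ifs <;> simp [hD]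
        · simp [this]
      · rw [if_neg h0]
  exact ⟨key, fun S => (ciInf_le (Set.finite_range _).bddBelow k).trans (key S)⟩
end

section
/- Let n ≥ 2 and define the averaging collaboration strategy C : [0,1]^n → {0,1} by C(p_1, …, p_n) = round((p_1 + ⋯ + p_n)/n). Then C is not reliable: there exists a collaboration setting S such that acc_C(S) < min_{i∈[n]} acc_i(S). -/
open Finset

/-- Low prediction value. -/
noncomputable def lowC (n : ℕ) : ℝ := (2 * n - 1) / (4 * n)

/-- Unnormalised masses. -/
noncomputable def massW (n : ℕ) : (Bool × Bool) × Bool → ℝ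
  | ((true, false), false) => (2 * n + 1) / (12 * n + 4)
  | ((false, true), false) => (2 * n + 1) / (12 * n + 4)
  | ((true, true), true) => 3 * (2 * n + 1) / (12 * n + 4)
  | ((false, false), true) => (2 * n - 1) / (12 * n + 4)
  | _ => 0

/-- Agent 0 sees the first bit, all the others the second bit. -/
noncomputable def predP (n : ℕ) (i : Fin n) (x : Bool × Bool) : ℝ :=
  if i.val = 0 then (if x.1 then 3/4 else lowC n) else (if x.2 then 3/4 else lowC n)

lemma lowC_pos (n : ℕ) (hn : 2 ≤ n) : 0 ≤ lowC n := by
  have h : (2:ℝ) ≤ n := by exact_mod_cast hn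
  unfold lowC
  apply div_nonneg <;> linarith

lemma lowC_lt (n : ℕ) (hn : 2 ≤ n) : lowC n < 1/2 := by
  have h : (2:ℝ) ≤ n := by exact_mod_cast hn
  unfold lowC
  rw [div_lt_iff₀ (by linarith)]
  linarith

lemma lowC_mul (n : ℕ) (hn : 2 ≤ n) : lowC n * n = n / 2 - 1 / 4 := by
  have h : (2:ℝ) ≤ n := by exact_mod_cast hn
  unfold lowC
  field_simp
  ring

noncomputable def badS (n : ℕ) (hn : 2 ≤ n) : CollabSetting n where
  X := Bool × Bool
  D := massW n
  D_nonneg := by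
    have h : (2:ℝ) ≤ n := by exact_mod_cast hn
    rintro ⟨⟨_ | _, _ | _⟩, _ | _⟩ <;> simp only [massW] <;>
      first | exact le_refl _ | (apply div_nonneg <;> linarith)
  D_sum_one := by
    have h : (2:ℝ) ≤ n := by exact_mod_cast hn
    simp [Fintype.sum_prod_type, massW]
    field_simp
    ring
  P := predP n
  P_mem := by
    intro i x
    have h1 := lowC_pos n hn
    have h2 := lowC_lt n hn
    unfold predP
    split_ifs <;> constructor <;> linarith
  calibrated := by
    intro i p _
    have h : (2:ℝ) ≤ n := by exact_mod_cast hn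
    have h2 := lowC_lt n hn
    have h3 : (3/4 : ℝ) ≠ lowC n := by intro h; linarith
    have h4 := lowC_mul n hn
    by_cases hp : p = 3/4
    · subst hp
      by_cases hi : i.val = 0 <;>
      · simp [Fintype.sum_prod_type, massW, predP, hi, h3.symm]
        field_simp
        ring
    · by_cases hq : p = lowC n
      · subst hq
        by_cases hi : i.val = 0 <;>
        · simp [Fintype.sum_prod_type, massW, predP, hi, h3]
          field_simp
          linarith
      · by_cases hi : i.val = 0 <;>
          simp [Fintype.sum_prod_type, massW, predP, hi, Ne.symm hp, Ne.symm hq]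

lemma badS_agent (n : ℕ) (hn : 2 ≤ n) (i : Fin n) :
    accAgent (badS n hn) i = 4 * (2 * n + 1) / (12 * n + 4) := by
  have h2 := lowC_lt n hn
  have r1 : rnd (3/4) = true := by unfold rnd; norm_num
  have r2 : rnd (lowC n) = false := by unfold rnd; rw [if_neg (not_le.mpr h2)]
  change (∑ z : (Bool × Bool) × Bool, if rnd (predP n i z.1) = z.2 then massW n z else 0) = _
  by_cases hi : i.val = 0 <;>
  · simp [Fintype.sum_prod_type, massW, predP, hi, r1, r2]
    ring

lemma sum_predP (n : ℕ) (hn : 2 ≤ n) (x : Bool × Bool) :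
    ∑ i, predP n i x = (if x.1 then 3/4 else lowC n) + (n - 1) * (if x.2 then 3/4 else lowC n) := by
  obtain ⟨m, rfl⟩ : ∃ m, n = m + 1 := ⟨n - 1, by omega⟩
  rw [Fin.sum_univ_succ]
  simp [predP]

lemma badS_strat (n : ℕ) (hn : 2 ≤ n) :
    accStrat (badS n hn) (fun p => rnd ((∑ i, p i) / n)) = 3 * (2 * n + 1) / (12 * n + 4) := by
  have h : (2:ℝ) ≤ n := by exact_mod_cast hn
  have h1 := lowC_pos n hn
  have h2 := lowC_lt n hn
  have h4 := lowC_mul n hn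
  have hn0 : (0:ℝ) < n := by linarith
  have r1 : rnd ((3/4 + (n - 1) * (3/4)) / n) = true := by
    unfold rnd; rw [if_pos]; rw [le_div_iff₀ hn0]; linarith
  have r2 : rnd ((3/4 + (n - 1) * lowC n) / n) = true := by
    unfold rnd; rw [if_pos]; rw [le_div_iff₀ hn0]; nlinarith
  have r3 : rnd ((lowC n + (n - 1) * (3/4)) / n) = true := by
    unfold rnd; rw [if_pos]; rw [le_div_iff₀ hn0]; nlinarith
  have r4 : rnd ((lowC n + (n - 1) * lowC n) / n) = false := by
    unfold rnd; rw [if_neg]; rw [not_le, div_lt_iff₀ hn0]; nlinarith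
  change (∑ z : (Bool × Bool) × Bool,
    if rnd ((∑ i, predP n i z.1) / n) = z.2 then massW n z else 0) = _
  simp only [sum_predP n hn]
  simp [Fintype.sum_prod_type, massW, r1, r2, r3, r4]

/-- The averaging collaboration strategy is not reliable. -/
theorem stmt_13 (n : ℕ) (hn : 2 ≤ n) :
    ∃ S : CollabSetting n,
      accStrat S (fun p => rnd ((∑ i, p i) / n)) < ⨅ i : Fin n, accAgent S i := by
  refine ⟨badS n hn, ?_⟩
  have : Nonempty (Fin n) := ⟨⟨0, by omega⟩⟩
  rw [badS_strat]
  simp only [badS_agent, ciInf_const]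
  have h : (2:ℝ) ≤ n := by exact_mod_cast hn
  apply div_lt_div_of_pos_right <;> linarith
end

section
/- Let n ≥ 3 be odd and define the majority-vote collaboration strategy C : [0,1]^n → {0,1} by C(p_1, …, p_n) = 1 if |{i ∈ [n] : round(p_i) = 1}| > n/2, and C(p_1, …, p_n) = 0 otherwise. Then C is not reliable: there exists a collaboration setting S such that acc_C(S) < min_{i∈[n]} acc_i(S). -/
open Finset

/-- Mass: `3/4` on the common point (label 0), `1/(4n)` on each private point (label 1). -/
noncomputable def ceD (n : ℕ) (z : Option (Fin n) × Bool) : ℝ :=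
  match z with
  | (none, false) => 3/4
  | (none, true) => 0
  | (some _, true) => 1 / (4 * n)
  | (some _, false) => 0

noncomputable def ceP (n : ℕ) (i : Fin n) (x : Option (Fin n)) : ℝ :=
  if x = some i then 1 else ((n:ℝ) - 1) / (4 * n - 1)

theorem sum_ne_const (n : ℕ) (i : Fin n) (c : ℝ) :
    ∑ j : Fin n, (if j = i then 0 else c) = ((n:ℝ) - 1) * c := by
  have h : ∀ j : Fin n, (if j = i then 0 else c) = c - (if j = i then c else 0) := by
    intro j; split_ifs <;> simp
  simp only [h, Finset.sum_sub_distrib, Finset.sum_ite_eq']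
  simp
  ring

theorem ceq_lt (n : ℕ) (hn : 3 ≤ n) : ((n:ℝ) - 1) / (4 * n - 1) < 1/2 := by
  have : (3:ℝ) ≤ n := by exact_mod_cast hn
  rw [div_lt_div_iff₀] <;> linarith

theorem ceq_nonneg (n : ℕ) (hn : 3 ≤ n) : 0 ≤ ((n:ℝ) - 1) / (4 * n - 1) := by
  have : (3:ℝ) ≤ n := by exact_mod_cast hn
  apply div_nonneg <;> linarith

theorem rnd_ceP (n : ℕ) (hn : 3 ≤ n) (i : Fin n) (x : Option (Fin n)) :
    rnd (ceP n i x) = decide (x = some i) := by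
  have := ceq_lt n hn
  unfold rnd ceP
  by_cases h : x = some i
  · simp [h]; norm_num
  · simp only [h, if_false, not_le.mpr this]; simp

theorem ce_cal (n : ℕ) (hn : 3 ≤ n) (i : Fin n) (p : ℝ) :
      (∑ z : Option (Fin n) × Bool, if ceP n i z.1 = p ∧ z.2 = true then ceD n z else 0)
        = p * (∑ z : Option (Fin n) × Bool, if ceP n i z.1 = p then ceD n z else 0) := by
  have hq := ceq_lt n hn
  have h3 : (3:ℝ) ≤ n := by exact_mod_cast hn
  have hd : (4 * (n:ℝ) - 1) ≠ 0 := by linarith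
  by_cases h1 : p = 1
  · subst h1
    have hq1 : ¬ (((n:ℝ) - 1) / (4 * n - 1) = 1) := by intro h; linarith
    have e : ∀ x, (ceP n i x = 1) ↔ x = some i := by
      intro x; unfold ceP; split_ifs with h <;> simp [h, hq1]
    simp [Fintype.sum_prod_type, ceD, e]
  by_cases h2 : p = ((n:ℝ) - 1) / (4 * n - 1)
  · have e : ∀ x, (ceP n i x = p) ↔ ¬ x = some i := by
      intro x; unfold ceP; split_ifs with h <;> simp [h, h2]
      intro h; linarith
    simp only [e]
    simp [Fintype.sum_prod_type, ceD, ite_not]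
    rw [sum_ne_const]
    have h0 : (n:ℝ) ≠ 0 := by linarith
    have h4 : p * (4 * n - 1) = n - 1 := by rw [h2]; exact div_mul_cancel₀ _ hd
    have h5 : (n:ℝ) * (n:ℝ)⁻¹ = 1 := mul_inv_cancel₀ h0
    clear h2 e
    field_simp
    linarith
  · have e : ∀ x, ¬ (ceP n i x = p) := by
      intro x; unfold ceP; split_ifs with h
      · exact fun h => h1 h.symm
      · exact fun h => h2 h.symm
    simp [e]

noncomputable def ceS (n : ℕ) (hn : 3 ≤ n) : CollabSetting n where
  X := Option (Fin n)
  D := ceD n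
  D_nonneg := by
    rintro ⟨_ | _, _ | _⟩ <;> simp only [ceD] <;> positivity
  D_sum_one := by
    have : (n:ℝ) ≠ 0 := by positivity
    simp [Fintype.sum_prod_type, ceD]
    field_simp
    norm_num
  P := ceP n
  P_mem := by
    intro i x
    have h1 := ceq_lt n hn
    have h2 := ceq_nonneg n hn
    unfold ceP
    split_ifs <;> constructor <;> linarith
  calibrated := fun i p _ => ce_cal n hn i p

/-- The majority-vote collaboration strategy is not reliable. -/
theorem stmt_14 (n : ℕ) (hn : 3 ≤ n) (hodd : Odd n) (C : (Fin n → ℝ) → Bool)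
    (hC : ∀ p : Fin n → ℝ,
      C p = decide (n < 2 * ((Finset.univ.filter fun i : Fin n => rnd (p i) = true).card))) :
    ∃ S : CollabSetting n, accStrat S C < ⨅ i : Fin n, accAgent S i := by
  have h3 : (3:ℝ) ≤ n := by exact_mod_cast hn
  refine ⟨ceS n hn, ?_⟩
  have hA : ∀ i, accAgent (ceS n hn) i = 3/4 + 1 / (4 * n) := by
    intro i
    change (∑ z : Option (Fin n) × Bool,
      if rnd (ceP n i z.1) = z.2 then ceD n z else 0) = _
    simp only [rnd_ceP n hn]
    simp [Fintype.sum_prod_type, ceD]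
  have hM : accStrat (ceS n hn) C = 3/4 := by
    change (∑ z : Option (Fin n) × Bool,
      if C (fun i => ceP n i z.1) = z.2 then ceD n z else 0) = _
    have hc : ∀ x, C (fun i => ceP n i x) = false := by
      intro x
      rw [hC]
      simp only [rnd_ceP n hn, decide_eq_true_eq, decide_eq_false_iff_not, not_lt]
      have : (Finset.univ.filter fun i : Fin n => x = some i).card ≤ 1 := by
        rw [Finset.card_le_one]
        intro a ha b hb
        simp only [Finset.mem_filter, Finset.mem_univ, true_and] at ha hb
        exact Option.some.inj (ha.symm.trans hb)
      omega
    simp [Fintype.sum_prod_type, ceD, hc]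
  have : Nonempty (Fin n) := ⟨⟨0, by omega⟩⟩
  simp only [hA, hM, ciInf_const]
  have : (0:ℝ) < 1 / (4 * n) := by positivity
  linarith
end
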